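/- The infinite series identity 15π/(4√3) = Σ_{k=0}^{∞} (-1/27)^k · [(1/2)_k (2/3)_k (1)_k] / [(4/3)_k (4/3)_k (11/6)_k] · (21k² + 26k + 7) holds, where the sum is over natural numbers k and all quantities are real numbers. -/

import Mathlib

noncomputable def risingFactorial (a : ℝ) (k : ℕ) : ℝ := ∏ i ∈ Finset.range k, (a + i)

/-- ratio `F(n+1,k)/F(n,k)` up to sign -/
noncomputable def rhoAux (n k : ℝ) : ℝ :=
  ((9*n+6*k+13)*(n+k+1)*(3*n+3*k+2)*(2*n+1)*(2*n+2)*(6*n+4)*(6*n+7)*(3*n+2)) /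
  ((9*n+6*k+4)*(3*n+k+2)*(3*n+k+3)*(3*n+k+4)*(6*n+3*k+4)*(6*n+3*k+7)*(6*n+3*k+5)*(6*n+3*k+8))

/-- ratio `F(n,k+1)/F(n,k)` up to sign -/
noncomputable def sigAux (n k : ℝ) : ℝ :=
  ((9*n+6*k+10)*(3*k+1)*(n+k+1)*(3*n+3*k+2)) /
  ((9*n+6*k+4)*(3*n+k+2)*(6*n+3*k+4)*(6*n+3*k+5))

/-- numerator of the certificate -/
noncomputable def polAux (n k : ℝ) : ℝ :=
  (1344 + 10368*n + 31056*n^2 + 45360*n^3 + 32400*n^4 + 9072*n^5)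
  + (4530 + 27309*n + 60075*n^2 + 57348*n^3 + 20088*n^4)*k
  + (5421 + 24228*n + 35100*n^2 + 16524*n^3)*k^2
  + (2961 + 8721*n + 6237*n^2)*k^3 + (783 + 1134*n)*k^4 + 81*k^5

/-- denominator of the certificate -/
noncomputable def denAux (n k : ℝ) : ℝ :=
  3*((9*n+6*k+4)*(3*n+k+2)*(3*n+k+3)*(6*n+3*k+4)*(6*n+3*k+5))

noncomputable def cerAux (n k : ℝ) : ℝ := polAux n k / denAux n k

noncomputable def FAux : ℕ → ℕ → ℝ
  | 0, k => (-1)^k * (4 / (3*(3*(k:ℝ)+1)*((k:ℝ)+1)))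
  | (n+1), k => FAux n k * (-rhoAux n k)

theorem rho_nonneg (n k : ℕ) : 0 ≤ rhoAux n k := by unfold rhoAux; positivity

theorem rho_le (n k : ℕ) : rhoAux n k ≤ 3/4 := by
  unfold rhoAux
  rw [div_le_iff₀ (by positivity), ← sub_nonneg]
  ring_nf
  positivity

theorem cer_nonneg (n k : ℕ) : 0 ≤ cerAux n k := by
  unfold cerAux polAux denAux; positivity

theorem cer_le (n k : ℕ) : cerAux n k ≤ 2 := by
  unfold cerAux polAux denAux
  rw [div_le_iff₀ (by positivity), ← sub_nonneg]
  ring_nf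
  positivity

theorem sig_rho (n k : ℝ) (hn : 0 ≤ n) (hk : 0 ≤ k) :
    sigAux n k * rhoAux n (k+1) = rhoAux n k * sigAux (n+1) k := by
  unfold sigAux rhoAux
  rw [div_mul_div_comm, div_mul_div_comm, div_eq_div_iff (by positivity) (by positivity)]
  ring

theorem F_succ_k (n k : ℕ) : FAux n (k+1) = FAux n k * (-sigAux n k) := by
  induction n with
  | zero =>
    simp only [FAux, sigAux]
    push_cast
    rw [pow_succ]
    field_simp
    ring
  | succ n ih =>
    simp only [FAux]
    rw [ih]
    have := sig_rho n k (by positivity) (by positivity)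
    push_cast
    linear_combination (FAux n k) * this

theorem cer_id (n k : ℝ) (hn : 0 ≤ n) (hk : 0 ≤ k) :
    1 + rhoAux n k = cerAux n k + sigAux n k * cerAux n (k+1) := by
  unfold sigAux rhoAux cerAux denAux
  have h1 : 9*n+6*k+4 ≠ 0 := by positivity
  have h2 : 3*n+k+2 ≠ 0 := by positivity
  have h3 : 3*n+k+3 ≠ 0 := by positivity
  have h4 : 3*n+k+4 ≠ 0 := by positivity
  have h5 : 6*n+3*k+4 ≠ 0 := by positivity
  have h6 : 6*n+3*k+5 ≠ 0 := by positivity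
  have h7 : 6*n+3*k+7 ≠ 0 := by positivity
  have h8 : 6*n+3*k+8 ≠ 0 := by positivity
  have h9 : 9*n+6*k+10 ≠ 0 := by positivity
  rw [show 9*n+6*(k+1)+4 = 9*n+6*k+10 by ring, show 3*n+(k+1)+2 = 3*n+k+3 by ring,
    show 3*n+(k+1)+3 = 3*n+k+4 by ring, show 6*n+3*(k+1)+4 = 6*n+3*k+7 by ring,
    show 6*n+3*(k+1)+5 = 6*n+3*k+8 by ring]
  field_simp
  unfold polAux
  ring

theorem wz (n k : ℕ) :
    FAux n k - FAux (n+1) k = FAux n k * cerAux n k - FAux n (k+1) * cerAux n ((k+1 : ℕ):ℝ) := by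
  rw [F_succ_k]
  simp only [FAux]
  have := cer_id n k (by positivity) (by positivity)
  push_cast
  linear_combination (FAux n k) * this

theorem F_bound (n k : ℕ) : |FAux n k| ≤ (3/4)^n * (2 / ((k:ℝ)+1)^2) := by
  induction n with
  | zero =>
    simp only [FAux, abs_mul, abs_pow, abs_neg, abs_one, one_pow, one_mul, pow_zero]
    rw [abs_of_nonneg (by positivity), div_le_div_iff₀ (by positivity) (by positivity)]
    nlinarith [sq_nonneg (k:ℝ), (Nat.cast_nonneg k : (0:ℝ) ≤ k)]
  | succ n ih =>
    simp only [FAux, abs_mul, abs_neg]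
    rw [abs_of_nonneg (rho_nonneg n k)]
    calc |FAux n k| * rhoAux n k ≤ ((3/4)^n * (2 / ((k:ℝ)+1)^2)) * (3/4) :=
          mul_le_mul ih (rho_le n k) (rho_nonneg n k) (by positivity)
      _ = _ := by ring

theorem summ_aux : Summable (fun k : ℕ => 2 / ((k:ℝ)+1)^2) := by
  have h := (summable_nat_add_iff 1).2 (Real.summable_one_div_nat_pow (p := 2).2 (by norm_num))
  have h2 := h.mul_left 2
  refine h2.congr fun k => ?_
  push_cast
  ring

theorem F_summable (n : ℕ) : Summable (FAux n) := by
  refine Summable.of_norm_bounded (summ_aux.mul_left ((3/4)^n)) fun k => ?_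
  exact F_bound n k

theorem F_tendsto_k (n : ℕ) : Filter.Tendsto (fun k : ℕ => FAux n k * cerAux n k) Filter.atTop (nhds 0) := by
  have h := (F_summable n).tendsto_atTop_zero.abs.mul_const 2
  simp only [abs_zero, zero_mul] at h
  refine squeeze_zero_norm (fun k => ?_) h
  rw [Real.norm_eq_abs, abs_mul, abs_of_nonneg (cer_nonneg n k)]
  exact mul_le_mul_of_nonneg_left (cer_le n k) (abs_nonneg _)

theorem S_step (n : ℕ) : (∑' k, FAux n k) - ∑' k, FAux (n+1) k = FAux n 0 * cerAux n 0 := by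
  have h := ((F_summable n).hasSum.sub (F_summable (n+1)).hasSum).tendsto_sum_nat
  refine tendsto_nhds_unique h ?_
  have h2 : (fun K : ℕ => ∑ k ∈ Finset.range K, (FAux n k - FAux (n+1) k)) =
      fun K : ℕ => FAux n 0 * cerAux n 0 - FAux n K * cerAux n K := by
    funext K
    simp only [wz]
    rw [Finset.sum_range_sub' (fun k : ℕ => FAux n k * cerAux n k)]
    simp
  rw [h2]
  simpa using (F_tendsto_k n).const_sub (FAux n 0 * cerAux n 0)

theorem S_bound (n : ℕ) : |∑' k, FAux n k| ≤ (3/4)^n * ∑' k : ℕ, 2 / ((k:ℝ)+1)^2 := by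
  rw [← tsum_mul_left]
  exact tsum_of_norm_bounded (f := FAux n) (summ_aux.mul_left ((3/4)^n)).hasSum (F_bound n)

theorem S_tendsto : Filter.Tendsto (fun n => ∑' k, FAux n k) Filter.atTop (nhds 0) := by
  refine squeeze_zero_norm S_bound ?_
  simpa using (tendsto_pow_atTop_nhds_zero_of_lt_one (r := (3/4:ℝ)) (by norm_num) (by norm_num)).mul_const
    (∑' k : ℕ, 2 / ((k:ℝ)+1)^2)

theorem G_summable : Summable (fun n : ℕ => FAux n 0 * cerAux n 0) := by
  refine Summable.of_norm_bounded
    ((summable_geometric_of_lt_one (r := (3/4:ℝ)) (by norm_num) (by norm_num)).mul_right 4) fun n => ?_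
  rw [Real.norm_eq_abs, abs_mul]
  have h1 := F_bound n 0
  have h2 := cer_le n 0
  have h3 := cer_nonneg n 0
  simp only [Nat.cast_zero] at h1 h2 h3
  rw [abs_of_nonneg h3]
  calc |FAux n 0| * cerAux n 0 ≤ ((3/4)^n * (2 / ((0:ℝ)+1)^2)) * 2 :=
        mul_le_mul h1 h2 h3 (by positivity)
    _ = _ := by ring

theorem G_hasSum : ∑' n : ℕ, FAux n 0 * cerAux n 0 = ∑' k, FAux 0 k := by
  refine tendsto_nhds_unique G_summable.hasSum.tendsto_sum_nat ?_
  have h2 : (fun K : ℕ => ∑ n ∈ Finset.range K, (FAux n 0 * cerAux n 0)) =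
      fun K : ℕ => (∑' k, FAux 0 k) - ∑' k, FAux K k := by
    funext K
    simp only [← S_step]
    rw [Finset.sum_range_sub' (fun n : ℕ => ∑' k, FAux n k)]
  rw [h2]
  simpa using S_tendsto.const_sub (∑' k, FAux 0 k)

/-- antiderivative -/
noncomputable def antiAux (x : ℝ) : ℝ :=
  (1/Real.sqrt 3) * Real.arctan ((2*x-1)/Real.sqrt 3) - (1/2) * Real.log (x^2-x+1)

theorem anti_deriv (x : ℝ) : HasDerivAt antiAux ((1-x)/(x^2-x+1)) x := by
  have hp : 0 < x^2-x+1 := by nlinarith [sq_nonneg (2*x-1)]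
  have h3 : Real.sqrt 3 ^ 2 = 3 := Real.sq_sqrt (by norm_num)
  have h30 : Real.sqrt 3 ≠ 0 := by positivity
  have h1 : HasDerivAt (fun x : ℝ => (2*x-1)/Real.sqrt 3) (2/Real.sqrt 3) x := by
    simpa using (((hasDerivAt_id x).const_mul 2).sub_const 1).div_const (Real.sqrt 3)
  have h2 : HasDerivAt (fun x : ℝ => x^2-x+1) (2*x-1) x := by
    simpa using (((hasDerivAt_id x).pow 2).sub (hasDerivAt_id x)).add_const 1
  have h := (h1.arctan.const_mul (1/Real.sqrt 3)).sub ((h2.log hp.ne').const_mul (1/2))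
  refine h.congr_deriv ?_
  have e : 1 + ((2*x-1)/Real.sqrt 3)^2 = 4*(x^2-x+1)/3 := by
    rw [div_pow, h3]; ring
  rw [e]
  have e2 : (1/Real.sqrt 3) * (1/(4*(x^2-x+1)/3) * (2/Real.sqrt 3)) = 1/(2*(x^2-x+1)) := by
    field_simp
    rw [h3]; ring
  rw [e2]
  field_simp
  ring

theorem anti_val : antiAux 1 - antiAux 0 = Real.pi / (3 * Real.sqrt 3) := by
  have h6 : Real.arctan (1/Real.sqrt 3) = Real.pi/6 := by
    rw [← Real.tan_pi_div_six]
    apply Real.arctan_tan <;> linarith [Real.pi_pos]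
  unfold antiAux
  norm_num
  rw [neg_div, Real.arctan_neg, h6]
  field_simp
  ring

theorem geo_aux (x : ℝ) (hx : 0 ≤ x) (K : ℕ) :
    ∑ k ∈ Finset.range K, (-1)^k * (x^(3*k) - x^(3*k+2)) =
      (1-x)/(x^2-x+1) - (-1)^K * x^(3*K) * ((1-x)/(x^2-x+1)) := by
  have hp : x^2-x+1 ≠ 0 := by nlinarith [sq_nonneg (2*x-1)]
  induction K with
  | zero => simp
  | succ K ih =>
    rw [Finset.sum_range_succ, ih]
    have e : (1-x)/(x^2-x+1) * (x^2-x+1) = 1 - x := div_mul_cancel₀ _ hp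
    generalize (1-x)/(x^2-x+1) = q at *
    have e2 : q * (1+x^3) = 1 - x^2 := by linear_combination (1+x) * e
    rw [mul_add 3 K 1, pow_add x, pow_add x, pow_succ (-1:ℝ)]
    linear_combination (-(-1)^K * x^(3*K)) * e2

theorem base_partial (K : ℕ) :
    |∑ k ∈ Finset.range K, (-1:ℝ)^k * (1/(3*(k:ℝ)+1) - 1/(3*(k:ℝ)+3)) - Real.pi / (3 * Real.sqrt 3)|
      ≤ 2 / (3*(K:ℝ)+1) := by
  have hc : Continuous (fun x : ℝ => (1-x)/(x^2-x+1)) := by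
    refine Continuous.div (by fun_prop) (by fun_prop) fun x => ?_
    nlinarith [sq_nonneg (2*x-1)]
  have hA : ∫ x in (0:ℝ)..1, (1-x)/(x^2-x+1) = Real.pi / (3 * Real.sqrt 3) := by
    rw [← anti_val]
    exact intervalIntegral.integral_eq_sub_of_hasDerivAt (fun x _ => anti_deriv x)
      (hc.intervalIntegrable _ _)
  have hS : ∫ x in (0:ℝ)..1, ∑ k ∈ Finset.range K, (-1:ℝ)^k * (x^(3*k) - x^(3*k+2)) =
      ∑ k ∈ Finset.range K, (-1:ℝ)^k * (1/(3*(k:ℝ)+1) - 1/(3*(k:ℝ)+3)) := by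
    rw [intervalIntegral.integral_finsetSum]
    · refine Finset.sum_congr rfl fun k _ => ?_
      rw [intervalIntegral.integral_const_mul, intervalIntegral.integral_sub, integral_pow, integral_pow]
      · push_cast
        simp
        ring
      · exact (continuous_pow _).intervalIntegrable _ _
      · exact (continuous_pow _).intervalIntegrable _ _
    · intro k _
      exact Continuous.intervalIntegrable (by fun_prop) _ _
  rw [← hS, ← hA, ← intervalIntegral.integral_sub]
  · have hb : ∫ x in (0:ℝ)..1, 2 * x^(3*K) = 2 / (3*(K:ℝ)+1) := by
      rw [intervalIntegral.integral_const_mul, integral_pow]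
      push_cast
      simp
      ring
    rw [← hb, ← Real.norm_eq_abs]
    refine intervalIntegral.norm_integral_le_of_norm_le zero_le_one ?_ ?_
    · refine Filter.Eventually.of_forall fun x hx => ?_
      have hx0 : 0 ≤ x := hx.1.le
      have hx1 : x ≤ 1 := hx.2
      have hp : 0 < x^2-x+1 := by nlinarith [sq_nonneg (2*x-1)]
      rw [geo_aux x hx0, sub_sub_cancel_left, norm_neg, norm_mul, norm_mul, norm_pow, norm_neg, norm_one,
        one_pow, one_mul, Real.norm_of_nonneg (by positivity),
        Real.norm_of_nonneg (div_nonneg (by linarith) hp.le), mul_comm]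
      refine mul_le_mul_of_nonneg_right ?_ (by positivity)
      rw [div_le_iff₀ hp]
      nlinarith [sq_nonneg (2*x-1)]
    · exact Continuous.intervalIntegrable (by fun_prop) _ _
  · exact Continuous.intervalIntegrable (by fun_prop) _ _
  · exact hc.intervalIntegrable _ _

theorem base_sum : ∑' k, FAux 0 k = 2 * (Real.pi / (3 * Real.sqrt 3)) := by
  refine tendsto_nhds_unique (F_summable 0).hasSum.tendsto_sum_nat ?_
  have h1 : Filter.Tendsto (fun K : ℕ => 2 / (3*(K:ℝ)+1)) Filter.atTop (nhds 0) := by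
    refine Filter.Tendsto.const_div_atTop ?_ 2
    refine Filter.tendsto_atTop_add_const_right _ _ ?_
    exact tendsto_natCast_atTop_atTop.const_mul_atTop (by norm_num)
  have h3 : Filter.Tendsto (fun K : ℕ => ∑ k ∈ Finset.range K,
      (-1:ℝ)^k * (1/(3*(k:ℝ)+1) - 1/(3*(k:ℝ)+3))) Filter.atTop (nhds (Real.pi / (3 * Real.sqrt 3))) :=
    tendsto_iff_norm_sub_tendsto_zero.2 (squeeze_zero (fun _ => norm_nonneg _) base_partial h1)
  have h2 := h3.const_mul 2
  refine h2.congr fun K => ?_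
  rw [Finset.mul_sum]
  refine Finset.sum_congr rfl fun k _ => ?_
  simp only [FAux]
  field_simp
  ring

theorem rf_succ (a : ℝ) (k : ℕ) : risingFactorial a (k+1) = risingFactorial a k * (a + k) := by
  simp [risingFactorial, Finset.prod_range_succ]

theorem rf_pos (a : ℝ) (ha : 0 < a) (k : ℕ) : 0 < risingFactorial a k := by
  unfold risingFactorial
  exact Finset.prod_pos fun i _ => by positivity

/-- the Pochhammer part of the summand -/
noncomputable def tAux (k : ℕ) : ℝ :=
  (-1/27 : ℝ) ^ k * (risingFactorial (1/2) k * risingFactorial (2/3) k * risingFactorial (1) k) /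
        (risingFactorial (4/3) k * risingFactorial (4/3) k * risingFactorial (11/6) k)

theorem t_succ (n : ℕ) : tAux (n+1) = tAux n *
    (-((2*n+1)*(3*n+2)*(n+1)) / ((3*n+4)*(3*n+4)*(6*n+11))/3) := by
  unfold tAux
  simp only [rf_succ]
  have h1 := (rf_pos (4/3) (by norm_num) n).ne'
  have h2 := (rf_pos (11/6) (by norm_num) n).ne'
  have h3 : (4/3 + (n:ℝ)) = (3*n+4)/3 := by ring
  have h4 : (11/6 + (n:ℝ)) = (6*n+11)/6 := by ring
  rw [h3, h4, pow_succ]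
  field_simp
  ring

theorem F_zero (n : ℕ) : FAux n 0 = tAux n * ((9*n+4)*(6*n+5)/15) := by
  induction n with
  | zero => simp [FAux, tAux, risingFactorial]; norm_num
  | succ n ih =>
    rw [t_succ]
    simp only [FAux]
    rw [ih]
    unfold rhoAux
    push_cast
    simp only [mul_zero, add_zero]
    generalize tAux n = t
    field_simp
    ring

theorem cer_zero (n : ℕ) : 45/8 * (((9*(n:ℝ)+4)*(6*n+5)/15) * cerAux n 0) =
    21 * (n:ℝ)^2 + 26 * (n:ℝ) + 7 := by
  unfold cerAux polAux denAux
  simp only [mul_zero, add_zero]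
  field_simp
  ring

theorem stmt_15 :
    15 * Real.pi / (4 * Real.sqrt 3) =
      ∑' k : ℕ, (-1/27 : ℝ) ^ k * (risingFactorial (1/2) k * risingFactorial (2/3) k * risingFactorial (1) k) /
        (risingFactorial (4/3) k * risingFactorial (4/3) k * risingFactorial (11/6) k) * (21 * (k:ℝ)^2 + 26 * (k:ℝ) + 7) := by
  have h : 15 * Real.pi / (4 * Real.sqrt 3) = 45/8 * ∑' n : ℕ, FAux n 0 * cerAux n 0 := by
    rw [G_hasSum, base_sum]
    field_simp
    norm_num
  rw [h, ← tsum_mul_left]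
  refine tsum_congr fun n => ?_
  rw [F_zero, ← cer_zero]
  unfold tAux
  ring
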